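/- Let (R, m) be a Noetherian local ring, I, J ideals, and b, c positive integers. Then ν(J^c + I^b) ≥ bc if and only if ν(J) ≥ b and ν(I) ≥ c, where ν denotes order with respect to m. (This identifies the singular locus of the intersection of two basic objects: Sing(J^c + I^b, bc) = Sing(J, b) ∩ Sing(I, c) pointwise.) -/

import Mathlib

/-- A Noetherian local ring is regular if its maximal ideal is generated by
`d` elements, where `d` is the Krull dimension. -/
def IsRegularLocal (R : Type*) [CommRing R] [IsLocalRing R] : Prop :=
  IsNoetherianRing R ∧
    ∃ (d : ℕ) (s : Fin d → R),
      Ideal.span (Set.range s) = IsLocalRing.maximalIdeal R ∧ ringKrullDim R = d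

/-- The order of an ideal `K` with respect to an ideal `m`:
`ν(K) = sup { s : K ⊆ m^s }`. -/
noncomputable def idealOrder {R : Type*} [CommRing R] (m K : Ideal R) : ℕ∞ :=
  sSup {c : ℕ∞ | ∃ s : ℕ, c = s ∧ K ≤ m ^ s}

/-!
Since `J ^ c + I ^ b ≤ p ^ (b * c)` means that both summands lie in `p ^ (b * c)`, everything rests
on the implication `x ^ c ∈ p ^ (b * c) → x ∈ p ^ b`, that is, on the associated graded ring of `p`
being reduced. Let `p` be a prime generated by `s₁, …, s_d` with `d ≤ height p`. We show that the
graded ring is the polynomial ring `(R ⧸ p)[T₁, …, T_d]`, which is a domain. It suffices that a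
form `F` over `R` with `F(s) = 0` has all its coefficients in `p`. If it does not, work in
`R[T₁, …, T_d]`: its prime `p[T]`, of height at least `d`, contains the cross differences
`T_j s_i - s_j T_i` but not `F(T)`. Modulo these, `T_j ^ n F(s) = s_j ^ n F(T)`, so any smaller
prime containing them contains `s_j`, hence every `s_i`. Thus `p[T]` is minimal over `d - 1`
elements, contradicting Krull's height theorem.
-/

open IsLocalRing MvPolynomial

section Evaluation

variable {ι R : Type*}

theorem eval_smul_of_isHomogeneous [CommSemiring R] {n : ℕ} {G : MvPolynomial ι R}
    (hG : G.IsHomogeneous n) (a : R) (t : ι → R) : eval (a • t) G = a ^ n * eval t G := by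
  rw [eval_eq, eval_eq, Finset.mul_sum]
  refine Finset.sum_congr rfl fun d hd ↦ ?_
  simp only [Pi.smul_apply, smul_eq_mul, mul_pow, Finset.prod_mul_distrib,
    Finset.prod_pow_eq_pow_sum, ← hG.degree_eq_sum_deg_support hd]
  ring

theorem exists_isHomogeneous_of_mem_mul_span_pow [CommSemiring R] {I : Ideal R} {s : ι → R}
    {n : ℕ} {y : R} (hy : y ∈ I * Ideal.span (Set.range s) ^ n) :
    ∃ F : MvPolynomial ι R, F.IsHomogeneous n ∧ F ∈ I.map C ∧ eval s F = y := by
  induction hy using Submodule.mul_induction_on' with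
  | mem_mul_mem a ha z hz =>
    obtain ⟨F, hF, rfl⟩ := (Ideal.mem_span_pow_iff_exists_isHomogeneous s z).mp hz
    exact ⟨C a * F, hF.C_mul a, Ideal.mul_mem_right _ _ (Ideal.mem_map_of_mem C ha), by simp⟩
  | add x _ y _ hx hy =>
    obtain ⟨F, hF, hFI, rfl⟩ := hx
    obtain ⟨G, hG, hGI, rfl⟩ := hy
    exact ⟨F + G, hF.add hG, add_mem hFI hGI, map_add _ _ _⟩

variable [CommRing R]

theorem eval_sub_eval_mem {I : Ideal R} {u v : ι → R} (huv : ∀ i, u i - v i ∈ I)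
    (G : MvPolynomial ι R) : eval u G - eval v G ∈ I := by
  have h : Ideal.Quotient.mk I ∘ u = Ideal.Quotient.mk I ∘ v :=
    funext fun i ↦ Ideal.Quotient.eq.mpr (huv i)
  rw [← Ideal.Quotient.eq, map_eval, map_eval, h]

theorem eval_mem_mul_span_pow {I : Ideal R} {s : ι → R} {n : ℕ} {F : MvPolynomial ι R}
    (hF : F.IsHomogeneous n) (hFI : F ∈ I.map C) : eval s F ∈ I * Ideal.span (Set.range s) ^ n := by
  rw [eval_eq]
  refine sum_mem fun d hd ↦ Ideal.mul_mem_mul (mem_map_C_iff.mp hFI d) ?_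
  rw [hF.degree_eq_sum_deg_support hd, ← Finset.prod_pow_eq_pow_sum]
  exact Ideal.prod_mem_prod fun i _ ↦
    Ideal.pow_mem_pow (Ideal.subset_span (Set.mem_range_self i)) _

end Evaluation

section HomogeneousRelation

variable {ι S : Type*} [CommRing S] {P : Ideal S} [P.IsPrime] {s t : ι → S} {n : ℕ}
  {G : MvPolynomial ι S}

theorem mem_minimalPrimes_span_cross_sub (hs : Ideal.span (Set.range s) = P)
    (hG : G.IsHomogeneous n) (hGs : eval s G = 0) (hGt : eval t G ∉ P) {j : ι} (hj : t j ∉ P) :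
    P ∈ (Ideal.span (Set.range fun i ↦ t j * s i - s j * t i)).minimalPrimes := by
  have hsP (i : ι) : s i ∈ P := hs ▸ Ideal.subset_span (Set.mem_range_self i)
  refine ⟨⟨‹_›, Ideal.span_le.mpr <| Set.range_subset_iff.mpr fun i ↦
    sub_mem (P.mul_mem_left _ (hsP i)) (P.mul_mem_right _ (hsP j))⟩, ?_⟩
  rintro Q ⟨hQ, hle⟩ hQP
  have hcross (i : ι) : t j * s i - s j * t i ∈ Q :=
    hle (Ideal.subset_span (Set.mem_range_self i))
  have hsj : s j ∈ Q := by
    -- `t j • s` and `s j • t` agree modulo `Q`, and `G` takes the value `t j ^ n * 0` at the first.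
    have hrel : s j ^ n * eval t G ∈ Q := by
      have h := eval_sub_eval_mem (u := t j • s) (v := s j • t) hcross G
      rwa [eval_smul_of_isHomogeneous hG, eval_smul_of_isHomogeneous hG, hGs, mul_zero, zero_sub,
        neg_mem_iff] at h
    exact hQ.mem_of_pow_mem n ((hQ.mem_or_mem hrel).resolve_right fun h ↦ hGt (hQP h))
  rw [← hs, Ideal.span_le, Set.range_subset_iff]
  intro i
  have hti : t j * s i ∈ Q := (Submodule.sub_mem_iff_left Q (Q.mul_mem_right _ hsj)).mp (hcross i)
  exact (hQ.mem_or_mem hti).resolve_left fun h ↦ hj (hQP h)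

theorem height_lt_card_of_eval_eq_zero [IsNoetherianRing S] [Finite ι]
    (hs : Ideal.span (Set.range s) = P) (hG : G.IsHomogeneous n) (hGs : eval s G = 0)
    (hGt : eval t G ∉ P) : P.height < Nat.card ι := by
  obtain ⟨j, hj⟩ : ∃ j, t j ∉ P := by
    by_contra! htP
    have hts (i : ι) : t i - s i ∈ P :=
      sub_mem (htP i) (hs ▸ Ideal.subset_span (Set.mem_range_self i))
    exact hGt (by simpa [hGs] using eval_sub_eval_mem hts G)
  let g (i : ι) : S := t j * s i - s j * t i
  have hspan : Ideal.span (Set.range g) = Ideal.span (g '' {j}ᶜ) := by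
    refine le_antisymm (Ideal.span_le.mpr <| Set.range_subset_iff.mpr fun i ↦ ?_)
      (Ideal.span_mono (Set.image_subset_range _ _))
    obtain rfl | hij := eq_or_ne i j
    · simp [g, mul_comm]
    · exact Ideal.subset_span (Set.mem_image_of_mem g hij)
  have hmin : P ∈ (Ideal.span (g '' {j}ᶜ)).minimalPrimes :=
    hspan ▸ mem_minimalPrimes_span_cross_sub hs hG hGs hGt hj
  calc P.height ≤ (g '' {j}ᶜ).ncard :=
        Ideal.height_le_card_of_mem_minimalPrimes_span (Set.toFinite _) hmin
    _ ≤ ({j}ᶜ : Set ι).ncard := Nat.cast_le.mpr (Set.ncard_image_le (Set.toFinite _))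
    _ < Nat.card ι := Nat.cast_lt.mpr (Set.ncard_lt_card (by simp))

end HomogeneousRelation

section PolynomialExtension

variable {R : Type*} [CommRing R] (σ : Type*) (p : Ideal R) [p.IsPrime]

theorem isPrime_map_C : (p.map (C : R →+* MvPolynomial σ R)).IsPrime := by
  rw [← Ideal.mk_ker (I := p), ← ker_map]
  exact RingHom.ker_isPrime _

theorem height_le_height_map_C [IsNoetherianRing R] [Finite σ] :
    p.height ≤ (p.map (C : R →+* MvPolynomial σ R)).height := by
  have := isPrime_map_C σ p
  have : (p.map (C : R →+* MvPolynomial σ R)).LiesOver p := by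
    refine ⟨le_antisymm Ideal.le_comap_map fun x hx ↦ ?_⟩
    simpa using mem_map_C_iff.mp (Ideal.mem_comap.mp hx) 0
  rw [Ideal.height_eq_height_add_of_liesOver_of_hasGoingDown p (p.map C)]
  exact le_self_add

end PolynomialExtension

theorem height_maximalIdeal_eq_of_ringKrullDim_eq {R : Type*} [CommRing R] [IsLocalRing R] {d : ℕ}
    (hd : ringKrullDim R = d) : (maximalIdeal R).height = d := by
  rw [← maximalIdeal_height_eq_ringKrullDim] at hd
  exact_mod_cast hd

section Order

variable {ι R : Type*} [CommRing R]

theorem natCast_le_idealOrder_iff {m K : Ideal R} {b : ℕ} :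
    (b : ℕ∞) ≤ idealOrder m K ↔ K ≤ m ^ b := by
  refine ⟨fun h ↦ ?_, fun h ↦ le_sSup ⟨b, rfl, h⟩⟩
  cases b with
  | zero => simp
  | succ b =>
    rw [Nat.cast_add_one, ENat.natCast_add_one_le_iff, idealOrder, lt_sSup_iff] at h
    obtain ⟨_, ⟨s, rfl, hs⟩, hbs⟩ := h
    exact hs.trans (Ideal.pow_le_pow_right (Nat.cast_lt.mp hbs))

variable [IsNoetherianRing R] [Finite ι] {p : Ideal R} [p.IsPrime] {s : ι → R}

theorem mem_map_C_of_eval_eq_zero (hs : Ideal.span (Set.range s) = p)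
    (hcard : Nat.card ι ≤ p.height) {n : ℕ} {F : MvPolynomial ι R} (hF : F.IsHomogeneous n)
    (h0 : eval s F = 0) : F ∈ p.map C := by
  by_contra hFp
  have := isPrime_map_C ι p
  have hspan : Ideal.span (Set.range (C ∘ s)) = p.map (C : R →+* MvPolynomial ι R) := by
    rw [← hs, Ideal.map_span, Set.range_comp]
  have hzero : eval (C ∘ s) (map C F) = (0 : MvPolynomial ι R) := by rw [← map_eval, h0, map_zero]
  -- The variables form a generic point: evaluating at `X` gives back `F` itself.
  have hgeneric : eval X (map C F) ∉ p.map (C : R →+* MvPolynomial ι R) := by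
    rwa [eval_map, eval₂_eta]
  have hlt := height_lt_card_of_eval_eq_zero hspan (hF.map C) hzero hgeneric
  exact (hcard.trans (height_le_height_map_C ι p)).not_gt hlt

theorem eval_mem_pow_succ_iff (hs : Ideal.span (Set.range s) = p)
    (hcard : Nat.card ι ≤ p.height) {n : ℕ} {F : MvPolynomial ι R} (hF : F.IsHomogeneous n) :
    eval s F ∈ p ^ (n + 1) ↔ F ∈ p.map C := by
  subst hs
  rw [pow_succ']
  refine ⟨fun h ↦ ?_, eval_mem_mul_span_pow hF⟩
  obtain ⟨H, hH, hHp, hHF⟩ := exists_isHomogeneous_of_mem_mul_span_pow h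
  have hFH : F - H ∈ (Ideal.span (Set.range s)).map C :=
    mem_map_C_of_eval_eq_zero rfl hcard (hF.sub hH) (by rw [map_sub, hHF, sub_self])
  exact (Submodule.sub_mem_iff_left _ hHp).mp hFH

theorem mem_pow_succ_of_pow_mem (hs : Ideal.span (Set.range s) = p)
    (hcard : Nat.card ι ≤ p.height) {a c : ℕ} {x : R} (hx : x ∈ p ^ a)
    (hxc : x ^ c ∈ p ^ (a * c + 1)) : x ∈ p ^ (a + 1) := by
  obtain ⟨F, hF, rfl⟩ := (Ideal.mem_span_pow_iff_exists_isHomogeneous s x).mp (hs.symm ▸ hx)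
  rw [← map_pow, eval_mem_pow_succ_iff hs hcard (hF.pow c)] at hxc
  exact (eval_mem_pow_succ_iff hs hcard hF).mpr ((isPrime_map_C ι p).mem_of_pow_mem c hxc)

theorem pow_mem_pow_mul_iff (hs : Ideal.span (Set.range s) = p)
    (hcard : Nat.card ι ≤ p.height) {b c : ℕ} (hc : 0 < c) {x : R} :
    x ^ c ∈ p ^ (b * c) ↔ x ∈ p ^ b := by
  refine ⟨fun h ↦ ?_, fun h ↦ pow_mul p b c ▸ Ideal.pow_mem_pow h c⟩
  induction b with
  | zero => simp
  | succ a ih =>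
    have hlt : a * c < (a + 1) * c := Nat.mul_lt_mul_of_pos_right a.lt_succ_self hc
    exact mem_pow_succ_of_pow_mem hs hcard (ih (Ideal.pow_le_pow_right hlt.le h))
      (Ideal.pow_le_pow_right hlt h)

theorem natCast_mul_le_idealOrder_pow_iff (hs : Ideal.span (Set.range s) = p)
    (hcard : Nat.card ι ≤ p.height) {b c : ℕ} (hc : 0 < c) {K : Ideal R} :
    ((b * c : ℕ) : ℕ∞) ≤ idealOrder p (K ^ c) ↔ (b : ℕ∞) ≤ idealOrder p K := by
  rw [natCast_le_idealOrder_iff, natCast_le_idealOrder_iff]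
  refine ⟨fun h x hx ↦ ?_, fun h ↦ pow_mul p b c ▸ Ideal.pow_right_mono h c⟩
  exact (pow_mem_pow_mul_iff hs hcard hc).mp (h (Ideal.pow_mem_pow hx c))

theorem order_intersection_basic_objects_general (hs : Ideal.span (Set.range s) = p)
    (hcard : Nat.card ι ≤ p.height) (I J : Ideal R) {b c : ℕ} (hb : 0 < b) (hc : 0 < c) :
    ((b * c : ℕ) : ℕ∞) ≤ idealOrder p (J ^ c + I ^ b) ↔
      (b : ℕ∞) ≤ idealOrder p J ∧ (c : ℕ∞) ≤ idealOrder p I := by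
  rw [← natCast_mul_le_idealOrder_pow_iff hs hcard hc (K := J),
    ← natCast_mul_le_idealOrder_pow_iff hs hcard hb (K := I), mul_comm c b]
  simp only [natCast_le_idealOrder_iff, Submodule.add_eq_sup, sup_le_iff]

end Order

/-- `ν(J^c + I^b) ≥ bc` if and only if `ν(J) ≥ b` and `ν(I) ≥ c`
(the singular locus of the intersection of basic objects). -/
theorem order_intersection_basic_objects {R : Type*} [CommRing R] [IsLocalRing R]
    (hreg : IsRegularLocal R) (I J : Ideal R) (b c : ℕ) (hb : 0 < b) (hc : 0 < c) :
    ((b * c : ℕ) : ℕ∞) ≤ idealOrder (IsLocalRing.maximalIdeal R) (J ^ c + I ^ b) ↔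
      ((b : ℕ∞) ≤ idealOrder (IsLocalRing.maximalIdeal R) J ∧
        (c : ℕ∞) ≤ idealOrder (IsLocalRing.maximalIdeal R) I) := by
  obtain ⟨_, d, s, hs, hd⟩ := hreg
  exact order_intersection_basic_objects_general hs
    (by rw [Nat.card_fin, height_maximalIdeal_eq_of_ringKrullDim_eq hd]) I J hb hc
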